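/- Let f : ℝ × ℝ^m → ℝ be smooth and suppose for each w near w₀ the map t ↦ f(t,w) has zeros of odd order with a sign change from + to −, and assume ∂_t^k f ≠ 0 near a point where f vanishes to order exactly k. Then the set of points in f^{-1}(0) where the order of vanishing in t is locally constant is open and dense in f^{-1}(0) near that point; consequently one can find (t₀, w₁) arbitrarily close with f(·, w₁) vanishing to constant odd order k near w₁, and by the implicit function theorem applied to ∂_t^{k-1} f, f(t,w) = a(t,w)(t − t₀(w))^k with a smooth, a < 0, and t₀ smooth near w₁. -/

import Mathlib

open scoped ContDiff Topology

/-- Partial derivatives in the first variable of a smooth function are jointly smooth. -/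
theorem contDiff_iteratedDeriv_left {E : Type*} [NormedAddCommGroup E] [NormedSpace ℝ E]
    {f : ℝ → E → ℝ} (hf : ContDiff ℝ ∞ (Function.uncurry f)) (j : ℕ) :
    ContDiff ℝ ∞ (fun p : ℝ × E => iteratedDeriv j (fun t => f t p.2) p.1) := by
  induction j with
  | zero => simpa only [iteratedDeriv_zero] using! hf
  | succ j ih =>
    have key : (fun p : ℝ × E => iteratedDeriv (j + 1) (fun t => f t p.2) p.1) =
        fun p => fderiv ℝ (fun p : ℝ × E => iteratedDeriv j (fun t => f t p.2) p.1) p (1, 0) := by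
      funext p
      rw [iteratedDeriv_succ]
      have h1 := ((ih.differentiable (by simp)) p).hasFDerivAt
      have h2 : HasDerivAt (fun t : ℝ => (t, p.2)) (1, 0) p.1 :=
        (hasDerivAt_id p.1).prodMk (hasDerivAt_const p.1 p.2)
      exact (h1.comp_hasDerivAt p.1 h2).deriv
    rw [key]
    exact (contDiff_infty_iff_fderiv.1 ih).2.clm_apply contDiff_const

universe v

/-- The integral over a compact interval of a smooth function is `C^n` in the parameter. -/
theorem ContDiff.intervalIntegral_param_nat {E : Type} [NormedAddCommGroup E] [NormedSpace ℝ E]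
    [FiniteDimensional ℝ E] (a b : ℝ) (n : ℕ) :
    ∀ {F : Type v} [NormedAddCommGroup F] [NormedSpace ℝ F] [CompleteSpace F] {G : E × ℝ → F},
      ContDiff ℝ ∞ G → ContDiff ℝ n (fun x => ∫ s in a..b, G (x, s)) := by
  have hasF : ∀ {F : Type v} [NormedAddCommGroup F] [NormedSpace ℝ F] [CompleteSpace F]
      {G : E × ℝ → F}, ContDiff ℝ ∞ G → ∀ x, HasFDerivAt (fun x => ∫ s in a..b, G (x, s))
        (∫ s in a..b, (fderiv ℝ G (x, s)).comp (ContinuousLinearMap.inl ℝ E ℝ)) x := by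
    intro F _ _ _ G hG x
    have hcont : Continuous fun q : E × ℝ =>
        (fderiv ℝ G q).comp (ContinuousLinearMap.inl ℝ E ℝ) :=
      ((contDiff_infty_iff_fderiv.1 hG).2.continuous).clm_comp continuous_const
    obtain ⟨C, hC⟩ := ((isCompact_closedBall x 1).prod
      (isCompact_uIcc (a := a) (b := b))).exists_bound_of_continuousOn hcont.continuousOn
    refine intervalIntegral.hasFDerivAt_integral_of_dominated_of_fderiv_le
      (F' := fun x s => (fderiv ℝ G (x, s)).comp (ContinuousLinearMap.inl ℝ E ℝ))
      (bound := fun _ => C) (Metric.closedBall_mem_nhds x one_pos) ?_ ?_ ?_ ?_ ?_ ?_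
    · exact Filter.Eventually.of_forall fun y =>
        (hG.continuous.comp (Continuous.prodMk_right y)).aestronglyMeasurable
    · exact (hG.continuous.comp (Continuous.prodMk_right x)).intervalIntegrable _ _
    · exact (hcont.comp (Continuous.prodMk_right x)).aestronglyMeasurable
    · exact Filter.Eventually.of_forall fun s hs y hy =>
        hC (y, s) ⟨hy, Set.uIoc_subset_uIcc hs⟩
    · exact intervalIntegrable_const
    · refine Filter.Eventually.of_forall fun s _ y _ => ?_
      exact ((hG.differentiable (by simp)) (y, s)).hasFDerivAt.comp y
        (hasFDerivAt_prodMk_left y s)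
  induction n with
  | zero =>
    intro F _ _ _ G hG
    exact contDiff_zero.2 (continuous_iff_continuousAt.2 fun x => (hasF hG x).continuousAt)
  | succ n ih =>
    intro F _ _ _ G hG
    have : ((n + 1 : ℕ) : WithTop ℕ∞) = (n : WithTop ℕ∞) + 1 := by simp
    rw [this, contDiff_succ_iff_fderiv]
    refine ⟨fun x => (hasF hG x).differentiableAt, by simp, ?_⟩
    have hfd : fderiv ℝ (fun x => ∫ s in a..b, G (x, s)) = fun x =>
        ∫ s in a..b, (fderiv ℝ G (x, s)).comp (ContinuousLinearMap.inl ℝ E ℝ) :=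
      funext fun x => (hasF hG x).fderiv
    rw [hfd]
    exact ih (G := fun q => (fderiv ℝ G q).comp (ContinuousLinearMap.inl ℝ E ℝ))
      ((contDiff_infty_iff_fderiv.1 hG).2.clm_comp contDiff_const)

/-- The integral over a compact interval of a smooth function is smooth in the parameter. -/
theorem ContDiff.intervalIntegral_param {E : Type} {F : Type v} [NormedAddCommGroup E]
    [NormedSpace ℝ E] [FiniteDimensional ℝ E] [NormedAddCommGroup F] [NormedSpace ℝ F]
    [CompleteSpace F]
    {G : E × ℝ → F} (hG : ContDiff ℝ ∞ G) (a b : ℝ) :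
    ContDiff ℝ ∞ (fun x => ∫ s in a..b, G (x, s)) :=
  contDiff_infty.2 fun n => ContDiff.intervalIntegral_param_nat a b n hG

/-- If `h` vanishes to order `n + 1` at `τ`, the integral form of the Taylor remainder factors
`(t - τ) ^ (n + 1)` out of `h t`. -/
theorem eq_taylor_coeff_mul_pow {h : ℝ → ℝ} (hh : ContDiff ℝ ∞ h) {n : ℕ} {τ : ℝ}
    (hv : ∀ i < n + 1, iteratedDeriv i h τ = 0) (t : ℝ) :
    h t = ((n.factorial : ℝ)⁻¹ *
      ∫ s in (0 : ℝ)..1, (1 - s) ^ n * iteratedDeriv (n + 1) h (τ + s * (t - τ))) *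
        (t - τ) ^ (n + 1) := by
  have key := map_add_eq_sum_add_integral_iteratedFDeriv (f := h) (n := n) (x := τ) (y := t - τ)
    (fun s _ => (hh.of_le (by exact_mod_cast le_top)).contDiffAt)
  rw [Finset.sum_eq_zero] at key
  · simp only [iteratedFDeriv_apply_eq_iteratedDeriv_mul_prod, Finset.prod_const,
      Finset.card_univ, Fintype.card_fin, smul_eq_mul, add_sub_cancel, zero_add] at key
    rw [key, mul_assoc, ← intervalIntegral.integral_mul_const]
    congr 1
    refine intervalIntegral.integral_congr fun s _ => ?_
    ring
  · intro i hi
    simp [iteratedFDeriv_apply_eq_iteratedDeriv_mul_prod, hv i (Finset.mem_range.1 hi)]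

theorem taylor_coeff_neg {h : ℝ → ℝ} (hh : ContDiff ℝ ∞ h) {n : ℕ} {τ t : ℝ}
    (hn : ∀ x ∈ Set.uIcc τ t, iteratedDeriv (n + 1) h x < 0) :
    (n.factorial : ℝ)⁻¹ *
      ∫ s in (0 : ℝ)..1, (1 - s) ^ n * iteratedDeriv (n + 1) h (τ + s * (t - τ)) < 0 := by
  have hc : Continuous (iteratedDeriv (n + 1) h) :=
    hh.continuous_iteratedDeriv _ (by exact_mod_cast le_top)
  have hpos : 0 < ∫ s in (0 : ℝ)..1,
      -((1 - s) ^ n * iteratedDeriv (n + 1) h (τ + s * (t - τ))) := by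
    refine intervalIntegral.intervalIntegral_pos_of_pos_on ?_ ?_ one_pos
    · exact Continuous.intervalIntegrable (by fun_prop) _ _
    · intro s hs
      have hmem : τ + s * (t - τ) ∈ Set.uIcc τ t := by
        rw [← segment_eq_uIcc, segment_eq_image']
        exact ⟨s, ⟨hs.1.le, hs.2.le⟩, by simp⟩
      have h1 : 0 < (1 - s) ^ n := pow_pos (by linarith [hs.2]) n
      have := mul_neg_of_pos_of_neg h1 (hn _ hmem)
      linarith
  rw [intervalIntegral.integral_neg] at hpos
  exact mul_neg_of_pos_of_neg (by positivity) (by linarith)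

/-- A function vanishing to order `j` whose `j`-th derivative is negative is a negative multiple of
`(t - τ) ^ j`. -/
theorem exists_neg_mul_pow {h : ℝ → ℝ} (hh : ContDiff ℝ ∞ h) {j : ℕ} (hj : 0 < j) {τ t : ℝ}
    (hv : ∀ i < j, iteratedDeriv i h τ = 0)
    (hn : ∀ x ∈ Set.uIcc τ t, iteratedDeriv j h x < 0) :
    ∃ c < 0, h t = c * (t - τ) ^ j := by
  obtain ⟨n, rfl⟩ := Nat.exists_eq_succ_of_ne_zero hj.ne'
  exact ⟨_, taylor_coeff_neg hh hn, eq_taylor_coeff_mul_pow hh hv t⟩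

/-- A function of finite order that goes from positive to negative has a zero of odd order with
negative leading derivative. -/
theorem exists_odd_order_zero {h : ℝ → ℝ} (hh : ContDiff ℝ ∞ h) {a b : ℝ} (hab : a < b)
    (ha : 0 < h a) (hb : h b < 0) {n : ℕ}
    (hn : ∀ x ∈ Set.Icc a b, iteratedDeriv n h x < 0) :
    ∃ τ ∈ Set.Ioo a b, ∃ j ≤ n, Odd j ∧ (∀ i < j, iteratedDeriv i h τ = 0) ∧
      iteratedDeriv j h τ < 0 := by
  have hc : Continuous h := hh.continuous
  set S : Set ℝ := {x | x ∈ Set.Icc a b ∧ 0 < h x} with hS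
  have haS : a ∈ S := ⟨⟨le_rfl, hab.le⟩, ha⟩
  have hbdd : BddAbove S := ⟨b, fun x hx => hx.1.2⟩
  set τ := sSup S with hτ
  have hle : ∀ x ∈ S, x ≤ τ := fun x hx => le_csSup hbdd hx
  have haτ : a ≤ τ := hle a haS
  have hτb : τ ≤ b := csSup_le ⟨a, haS⟩ fun x hx => hx.1.2
  have h0 : 0 ≤ h τ := by
    have : closure S ⊆ {x | 0 ≤ h x} :=
      closure_minimal (fun x hx => hx.2.le) (isClosed_le continuous_const hc)
    exact this (csSup_mem_closure ⟨a, haS⟩ hbdd)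
  have hτb' : τ < b := lt_of_le_of_ne hτb fun e => by rw [e] at h0; linarith
  have hright : ∀ x, τ < x → x < b → h x ≤ 0 := by
    intro x h1 h2
    by_contra! h3
    exact absurd (hle x ⟨⟨haτ.trans h1.le, h2.le⟩, h3⟩) (not_le.2 h1)
  have hz : h τ = 0 := by
    refine le_antisymm (not_lt.1 fun hp => ?_) h0
    obtain ⟨r, hr, hball⟩ := Metric.isOpen_iff.1 (isOpen_lt continuous_const hc) τ hp
    obtain ⟨x, hx1, hx2⟩ := exists_between (lt_min hτb' (lt_add_of_pos_right τ hr))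
    have hxm : x ∈ Metric.ball τ r := by
      rw [Metric.mem_ball, Real.dist_eq, abs_of_pos (by linarith)]
      linarith [hx2.trans_le (min_le_right _ _)]
    have := hball hxm
    exact absurd (hright x hx1 (hx2.trans_le (min_le_left _ _))) (not_le.2 this)
  have haτ' : a < τ := lt_of_le_of_ne haτ fun e => by rw [← e] at hz; linarith
  have hex : ∃ j, iteratedDeriv j h τ ≠ 0 := ⟨n, (hn τ ⟨haτ, hτb⟩).ne⟩
  classical
  set j := Nat.find hex with hj
  have hjne : iteratedDeriv j h τ ≠ 0 := Nat.find_spec hex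
  have hv : ∀ i < j, iteratedDeriv i h τ = 0 := fun i hi => not_not.1 (Nat.find_min hex hi)
  have hjpos : 0 < j := Nat.pos_of_ne_zero fun e => hjne (by rw [e]; simpa using hz)
  have hcj : Continuous (iteratedDeriv j h) :=
    hh.continuous_iteratedDeriv _ (by exact_mod_cast le_top)
  have hsub : ∀ {r x : ℝ}, 0 < r → x ∈ Metric.ball τ r → Set.uIcc τ x ⊆ Metric.ball τ r := by
    intro r x hr hx
    rw [← segment_eq_uIcc]
    exact (convex_ball τ r).segment_subset (Metric.mem_ball_self hr) hx
  have hjneg : iteratedDeriv j h τ < 0 := by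
    refine lt_of_le_of_ne (not_lt.1 fun hp => ?_) hjne
    obtain ⟨r, hr, hball⟩ := Metric.isOpen_iff.1 (isOpen_lt continuous_const hcj) τ hp
    obtain ⟨x, hx1, hx2⟩ := exists_between (lt_min hτb' (lt_add_of_pos_right τ hr))
    have hxm : x ∈ Metric.ball τ r := by
      rw [Metric.mem_ball, Real.dist_eq, abs_of_pos (by linarith)]
      linarith [hx2.trans_le (min_le_right _ _)]
    obtain ⟨c, hcn, hce⟩ := exists_neg_mul_pow hh.neg hjpos (τ := τ) (t := x)
      (fun i hi => by
        rw [iteratedDeriv_fun_neg, hv i hi, neg_zero])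
      (fun y hy => by
        have h1 : 0 < iteratedDeriv j h y := hball (hsub hr hxm hy)
        rw [iteratedDeriv_fun_neg]
        linarith)
    have h2 : 0 < (x - τ) ^ j := pow_pos (by linarith) j
    have h3 := hright x hx1 (hx2.trans_le (min_le_left _ _))
    have h4 := mul_neg_of_neg_of_pos hcn h2
    linarith
  refine ⟨τ, ⟨haτ', hτb'⟩, j, Nat.find_le (hn τ ⟨haτ, hτb⟩).ne, ?_, hv, hjneg⟩
  obtain ⟨r, hr, hball⟩ := Metric.isOpen_iff.1 (isOpen_lt hcj continuous_const) τ hjneg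
  obtain ⟨x, hxS, hxr⟩ := exists_lt_of_lt_csSup ⟨a, haS⟩ (show τ - r < sSup S by linarith)
  have hxτ : x ≤ τ := hle x hxS
  have hxm : x ∈ Metric.ball τ r := by
    rw [Metric.mem_ball, Real.dist_eq, abs_sub_comm, abs_of_nonneg (by linarith)]
    linarith
  obtain ⟨c, hcn, hce⟩ := exists_neg_mul_pow hh hjpos (t := x) hv
    (fun y hy => hball (hsub hr hxm hy))
  by_contra hodd
  have h1 : 0 ≤ (x - τ) ^ j := (Nat.not_odd_iff_even.1 hodd).pow_nonneg _
  have h2 := mul_nonpos_of_nonpos_of_nonneg hcn.le h1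
  linarith [hxS.2]

theorem contDiff_slice {E : Type*} [NormedAddCommGroup E] [NormedSpace ℝ E]
    {f : ℝ → E → ℝ} (hf : ContDiff ℝ ∞ (Function.uncurry f)) (w : E) :
    ContDiff ℝ ∞ (fun t => f t w) :=
  hf.comp (contDiff_prodMk_left w)

theorem hasDerivAt_iteratedDeriv_left {E : Type*} [NormedAddCommGroup E] [NormedSpace ℝ E]
    {f : ℝ → E → ℝ} (hf : ContDiff ℝ ∞ (Function.uncurry f)) (n : ℕ) (t : ℝ) (w : E) :
    HasDerivAt (iteratedDeriv n (fun t => f t w)) (iteratedDeriv (n + 1) (fun t => f t w) t) t := by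
  rw [iteratedDeriv_succ]
  exact ((contDiff_slice hf w).differentiable_iteratedDeriv n
    (by exact_mod_cast WithTop.coe_lt_top _) t).hasDerivAt

/-- On a box where `∂ₜ^(n+1) f < 0`, a family of zeros of `∂ₜ^n f` is smooth in the parameter. -/
theorem contDiffOn_zero_iteratedDeriv {E : Type*} [NormedAddCommGroup E] [NormedSpace ℝ E]
    [CompleteSpace E] {f : ℝ → E → ℝ} (hf : ContDiff ℝ ∞ (Function.uncurry f)) {n : ℕ} {a b : ℝ}
    {W : Set E} (hW : IsOpen W)
    (hneg : ∀ t ∈ Set.Ioo a b, ∀ w ∈ W, iteratedDeriv (n + 1) (fun t => f t w) t < 0)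
    {θ : E → ℝ} (hθ : ∀ w ∈ W, θ w ∈ Set.Ioo a b)
    (hzero : ∀ w ∈ W, iteratedDeriv n (fun t => f t w) (θ w) = 0) :
    (∀ w ∈ W, ∀ t ∈ Set.Ioo a b, iteratedDeriv n (fun t => f t w) t = 0 → t = θ w) ∧
      ContDiffOn ℝ ∞ θ W := by
  have huniq : ∀ w ∈ W, ∀ t ∈ Set.Ioo a b,
      iteratedDeriv n (fun t => f t w) t = 0 → t = θ w := by
    intro w hw t ht h0
    have hanti : StrictAntiOn (iteratedDeriv n (fun t => f t w)) (Set.Ioo a b) := by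
      refine strictAntiOn_of_deriv_neg (convex_Ioo a b) ?_ ?_
      · exact ((contDiff_slice hf w).continuous_iteratedDeriv n
          (by exact_mod_cast le_top)).continuousOn
      · intro x hx
        rw [interior_Ioo] at hx
        rw [(hasDerivAt_iteratedDeriv_left hf n x w).deriv]
        exact hneg x hx w hw
    exact hanti.injOn ht (hθ w hw) (h0.trans (hzero w hw).symm)
  refine ⟨huniq, fun w hw => ContDiffAt.contDiffWithinAt ?_⟩
  set g : E × ℝ → ℝ := fun q => iteratedDeriv n (fun t => f t q.1) q.2 with hg
  have hgs : ContDiff ℝ ∞ g :=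
    (contDiff_iteratedDeriv_left hf n).comp (contDiff_snd.prodMk contDiff_fst)
  have hga : ContDiffAt ℝ ∞ g (w, θ w) := hgs.contDiffAt
  have hinv : (fderiv ℝ g (w, θ w) ∘L .inr ℝ E ℝ).IsInvertible := by
    have hd := (hneg _ (hθ w hw) w hw).ne
    refine ⟨ContinuousLinearEquiv.unitsEquivAut ℝ (Units.mk0 _ hd), ?_⟩
    ext
    have h1 := ((hgs.differentiable (by simp)) (w, θ w)).hasFDerivAt
    have h2 : HasDerivAt (fun t : ℝ => (w, t)) (0, 1) (θ w) :=
      (hasDerivAt_const (θ w) w).prodMk (hasDerivAt_id (θ w))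
    have h3 := (h1.comp_hasDerivAt (θ w) h2).unique (hasDerivAt_iteratedDeriv_left hf n (θ w) w)
    simpa using h3.symm
  have hn0 : (∞ : WithTop ℕ∞) ≠ 0 := by simp
  have hψ := hga.contDiffAt_implicitFunction hn0 hinv
  refine hψ.congr_of_eventuallyEq ?_
  have hself := hga.implicitFunction_apply_self hn0 hinv
  have hmem : ∀ᶠ v in 𝓝 w, hga.implicitFunction hn0 hinv v ∈ Set.Ioo a b := by
    refine hψ.continuousAt.eventually_mem (Ioo_mem_nhds ?_ ?_)
    · simpa [hself] using (hθ w hw).1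
    · simpa [hself] using (hθ w hw).2
  filter_upwards [hga.eventually_apply_implicitFunction hn0 hinv, hmem, hW.mem_nhds hw]
    with v hv1 hv2 hv3
  exact (huniq v hv3 _ hv2 (hv1.trans (hzero w hw))).symm

/-- The coefficient in the integral form of the Taylor remainder is jointly smooth in the base
point, the evaluation point and the parameter. -/
theorem contDiff_taylor_coeff {E : Type} [NormedAddCommGroup E] [NormedSpace ℝ E]
    [FiniteDimensional ℝ E] {f : ℝ → E → ℝ} (hf : ContDiff ℝ ∞ (Function.uncurry f)) (n : ℕ) :
    ContDiff ℝ ∞ fun q : (ℝ × ℝ) × E => (n.factorial : ℝ)⁻¹ * ∫ s in (0 : ℝ)..1,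
      (1 - s) ^ n * iteratedDeriv (n + 1) (fun t => f t q.2) (q.1.1 + s * (q.1.2 - q.1.1)) := by
  refine contDiff_const.mul (ContDiff.intervalIntegral_param (G := fun x : ((ℝ × ℝ) × E) × ℝ =>
    (1 - x.2) ^ n * iteratedDeriv (n + 1) (fun t => f t x.1.2)
      (x.1.1.1 + x.2 * (x.1.1.2 - x.1.1.1))) ?_ 0 1)
  have h1 : ContDiff ℝ ∞ fun x : ((ℝ × ℝ) × E) × ℝ => (1 - x.2) ^ n := by fun_prop
  have h2 : ContDiff ℝ ∞ fun x : ((ℝ × ℝ) × E) × ℝ =>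
      (x.1.1.1 + x.2 * (x.1.1.2 - x.1.1.1), x.1.2) := by fun_prop
  exact h1.mul ((contDiff_iteratedDeriv_left hf (n + 1)).comp h2)

/-- Factorization of `f` along a family of zeros of constant order `n + 1`. -/
theorem exists_factorization {E : Type} [NormedAddCommGroup E] [NormedSpace ℝ E]
    [FiniteDimensional ℝ E] {f : ℝ → E → ℝ} (hf : ContDiff ℝ ∞ (Function.uncurry f)) {n : ℕ}
    {a b : ℝ} {W : Set E}
    (hneg : ∀ t ∈ Set.Ioo a b, ∀ w ∈ W, iteratedDeriv (n + 1) (fun t => f t w) t < 0)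
    {θ : E → ℝ} (hθ : ∀ w ∈ W, θ w ∈ Set.Ioo a b) (hsm : ContDiffOn ℝ ∞ θ W)
    (hzero : ∀ w ∈ W, ∀ i < n + 1, iteratedDeriv i (fun t => f t w) (θ w) = 0) :
    ∃ A : ℝ × E → ℝ, ContDiffOn ℝ ∞ A (Set.Ioo a b ×ˢ W) ∧ (∀ p ∈ Set.Ioo a b ×ˢ W, A p < 0) ∧
      ∀ p ∈ Set.Ioo a b ×ˢ W, f p.1 p.2 = A p * (p.1 - θ p.2) ^ (n + 1) := by
  refine ⟨fun p => (n.factorial : ℝ)⁻¹ * ∫ s in (0 : ℝ)..1,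
    (1 - s) ^ n * iteratedDeriv (n + 1) (fun t => f t p.2) (θ p.2 + s * (p.1 - θ p.2)), ?_, ?_, ?_⟩
  · have hθ' : ContDiffOn ℝ ∞ (fun p : ℝ × E => θ p.2) (Set.Ioo a b ×ˢ W) :=
      hsm.comp contDiffOn_snd fun p hp => hp.2
    have hmap : ContDiffOn ℝ ∞ (fun p : ℝ × E => ((θ p.2, p.1), p.2)) (Set.Ioo a b ×ˢ W) :=
      (hθ'.prodMk contDiffOn_fst).prodMk contDiffOn_snd
    have hcomp := (contDiff_taylor_coeff hf n).comp_contDiffOn hmap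
    simpa only [Function.comp_def] using hcomp
  · intro p hp
    exact taylor_coeff_neg (contDiff_slice hf p.2) fun x hx =>
      hneg x (Set.ordConnected_Ioo.uIcc_subset (hθ _ hp.2) hp.1 hx) _ hp.2
  · intro p hp
    exact eq_taylor_coeff_mul_pow (contDiff_slice hf p.2) (hzero _ hp.2) p.1

/-- Near a zero of odd order `j` with negative leading derivative there is a box on which
`∂ₜ^j f < 0` and such that `f` goes from positive to negative on every vertical slice. -/
theorem exists_sign_change_box {E : Type*} [NormedAddCommGroup E] [NormedSpace ℝ E]
    {f : ℝ → E → ℝ} (hf : ContDiff ℝ ∞ (Function.uncurry f)) {t₁ : ℝ} {w₁ : E} {j : ℕ}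
    (hj : Odd j) (hv : ∀ i < j, iteratedDeriv i (fun t => f t w₁) t₁ = 0)
    (hneg : iteratedDeriv j (fun t => f t w₁) t₁ < 0) {N : Set (ℝ × E)} (hN : N ∈ 𝓝 (t₁, w₁)) :
    ∃ a b, ∃ W : Set E, t₁ ∈ Set.Ioo a b ∧ IsOpen W ∧ w₁ ∈ W ∧ Set.Icc a b ×ˢ W ⊆ N ∧
      (∀ t ∈ Set.Icc a b, ∀ w ∈ W, iteratedDeriv j (fun t => f t w) t < 0) ∧
      ∀ w ∈ W, 0 < f a w ∧ f b w < 0 := by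
  have hO : {p : ℝ × E | iteratedDeriv j (fun t => f t p.2) p.1 < 0} ∈ 𝓝 (t₁, w₁) :=
    (isOpen_lt (contDiff_iteratedDeriv_left hf j).continuous continuous_const).mem_nhds hneg
  obtain ⟨r, hr, hball⟩ := Metric.mem_nhds_iff.1 (Filter.inter_mem hN hO)
  have hbox : ∀ t ∈ Set.Icc (t₁ - r / 2) (t₁ + r / 2), ∀ w ∈ Metric.ball w₁ r,
      (t, w) ∈ N ∧ iteratedDeriv j (fun t => f t w) t < 0 := by
    intro t ht w hw
    refine hball ?_
    rw [Metric.mem_ball, Prod.dist_eq]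
    refine max_lt ?_ hw
    rw [Real.dist_eq]
    exact (abs_le.2 ⟨by linarith [ht.1], by linarith [ht.2]⟩).trans_lt (half_lt_self hr)
  have hfac : ∀ t ∈ Set.Icc (t₁ - r / 2) (t₁ + r / 2), ∃ c < 0, f t w₁ = c * (t - t₁) ^ j := by
    intro t ht
    refine exists_neg_mul_pow (contDiff_slice hf w₁) hj.pos hv fun x hx => ?_
    exact (hbox x (Set.ordConnected_Icc.uIcc_subset
      ⟨by linarith, by linarith⟩ ht hx) w₁ (Metric.mem_ball_self hr)).2
  have hfa : 0 < f (t₁ - r / 2) w₁ := by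
    obtain ⟨c, hc, he⟩ := hfac (t₁ - r / 2) ⟨le_rfl, by linarith⟩
    rw [he]
    exact mul_pos_of_neg_of_neg hc (hj.pow_neg (by linarith))
  have hfb : f (t₁ + r / 2) w₁ < 0 := by
    obtain ⟨c, hc, he⟩ := hfac (t₁ + r / 2) ⟨by linarith, le_rfl⟩
    rw [he]
    exact mul_neg_of_neg_of_pos hc (pow_pos (by linarith) j)
  have hcs : ∀ t, Continuous (f t) := fun t => hf.continuous.comp (Continuous.prodMk_right t)
  refine ⟨t₁ - r / 2, t₁ + r / 2,
    Metric.ball w₁ r ∩ ({w | 0 < f (t₁ - r / 2) w} ∩ {w | f (t₁ + r / 2) w < 0}),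
    ⟨by linarith, by linarith⟩, Metric.isOpen_ball.inter
      ((isOpen_lt continuous_const (hcs _)).inter (isOpen_lt (hcs _) continuous_const)),
    ⟨Metric.mem_ball_self hr, hfa, hfb⟩, fun p hp => (hbox p.1 hp.1 p.2 hp.2.1).1,
    fun t ht w hw => (hbox t ht w hw.1).2, fun w hw => hw.2⟩


/-- preparation of the finite-order sign change: if `t ↦ f(t,w)`
changes sign from `+` to `-` for all `w` near `w₀`, and `f(·, w₀)` vanishes at
`t₀` to exact order `k` (odd) with `∂_t^k f(t₀,w₀) < 0`, then the set of zeros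
where the order of vanishing in `t` is locally constant is open and dense in
`f⁻¹(0)` near `(t₀,w₀)`; consequently arbitrarily close to `(t₀,w₀)` there are
points `(t₁,w₁)` near which `f(t,w) = a(t,w)·(t - θ(w))^{k'}` with `a < 0`
smooth, `θ` smooth, and `k' ≤ k` odd. -/
theorem stmt_17 {m : ℕ}
    (f : ℝ → EuclideanSpace ℝ (Fin m) → ℝ)
    (hf : ContDiff ℝ (⊤ : ℕ∞) (Function.uncurry f))
    (t₀ : ℝ) (w₀ : EuclideanSpace ℝ (Fin m)) (k : ℕ) (hk : Odd k)
    (hvan : ∀ j < k, iteratedDeriv j (fun t => f t w₀) t₀ = 0)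
    (hneg : iteratedDeriv k (fun t => f t w₀) t₀ < 0)
    (hsign : ∃ δ > 0, ∀ w, dist w w₀ < δ →
      ∃ s t', t₀ - δ < s ∧ s < t' ∧ t' < t₀ + δ ∧ 0 < f s w ∧ f t' w < 0)
    (Z Good : Set (ℝ × EuclideanSpace ℝ (Fin m)))
    (ord : ℝ × EuclideanSpace ℝ (Fin m) → ℕ)
    (hZ : Z = {p | f p.1 p.2 = 0})
    (hord : ∀ p, ord p = sInf {j : ℕ | iteratedDeriv j (fun t => f t p.2) p.1 ≠ 0})
    (hGood : Good = {p | p ∈ Z ∧ ∃ V ∈ nhds p, ∀ q ∈ V ∩ Z, ord q = ord p}) :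
    -- `Good` is open in `Z` and dense in `Z` near `(t₀, w₀)`:
    ((∀ p ∈ Good, ∃ V ∈ nhds p, ∀ q ∈ V ∩ Z, q ∈ Good) ∧
      ∃ V ∈ nhds (t₀, w₀), ∀ p ∈ V ∩ Z, ∀ ε > 0, ∃ q ∈ Good, dist p q < ε) ∧
    -- factorization near nearby points of constant odd order:
    (∀ ε > 0, ∃ (t₁ : ℝ) (w₁ : EuclideanSpace ℝ (Fin m)) (k' : ℕ),
      dist (t₁, w₁) (t₀, w₀) < ε ∧ f t₁ w₁ = 0 ∧ Odd k' ∧ 0 < k' ∧ k' ≤ k ∧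
      ∃ (U : Set (ℝ × EuclideanSpace ℝ (Fin m)))
        (Uw : Set (EuclideanSpace ℝ (Fin m)))
        (a : ℝ × EuclideanSpace ℝ (Fin m) → ℝ)
        (θ : EuclideanSpace ℝ (Fin m) → ℝ),
        IsOpen U ∧ (t₁, w₁) ∈ U ∧ IsOpen Uw ∧ w₁ ∈ Uw ∧
        ContDiffOn ℝ (⊤ : ℕ∞) a U ∧ ContDiffOn ℝ (⊤ : ℕ∞) θ Uw ∧ θ w₁ = t₁ ∧
        (∀ p ∈ U, a p < 0) ∧
        (∀ p ∈ U, p.2 ∈ Uw → f p.1 p.2 = a p * (p.1 - θ p.2) ^ k')) := by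
  have hf' : ContDiff ℝ ∞ (Function.uncurry f) := hf
  refine ⟨⟨?_, ?_⟩, ?_⟩
  · intro p hp
    rw [hGood] at hp
    obtain ⟨-, V, hV, hVord⟩ := hp
    refine ⟨interior V, interior_mem_nhds.2 hV, fun q hq => ?_⟩
    rw [hGood]
    refine ⟨hq.2, V, mem_interior_iff_mem_nhds.1 hq.1, fun q' hq' => ?_⟩
    rw [hVord q' hq', hVord q ⟨interior_subset hq.1, hq.2⟩]
  · have hopen : ∀ j, IsOpen {p : ℝ × EuclideanSpace ℝ (Fin m) |
        iteratedDeriv j (fun t => f t p.2) p.1 ≠ 0} := fun j =>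
      isOpen_ne_fun (contDiff_iteratedDeriv_left hf' j).continuous continuous_const
    refine ⟨_, (hopen k).mem_nhds hneg.ne, fun p hp ε hε => ?_⟩
    classical
    have hex : ∃ n, ∃ q ∈ Z, dist p q < ε ∧
        iteratedDeriv k (fun t => f t q.2) q.1 ≠ 0 ∧ ord q = n :=
      ⟨ord p, p, hp.2, by simpa using hε, hp.1, rfl⟩
    obtain ⟨q, hqZ, hqd, hqk, hqn⟩ := Nat.find_spec hex
    refine ⟨q, ?_, hqd⟩
    rw [hGood]
    have hqord : iteratedDeriv (ord q) (fun t => f t q.2) q.1 ≠ 0 := by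
      rw [hord q]
      exact Nat.sInf_mem (s := {j : ℕ | iteratedDeriv j (fun t => f t q.2) q.1 ≠ 0}) ⟨k, hqk⟩
    refine ⟨hqZ, _, Filter.inter_mem ((hopen (ord q)).mem_nhds hqord)
      (Filter.inter_mem ((hopen k).mem_nhds hqk)
        ((isOpen_lt (continuous_const.dist continuous_id) continuous_const).mem_nhds hqd)), ?_⟩
    rintro q' ⟨⟨h1, h2, h3⟩, hZ'⟩
    refine le_antisymm ?_ ?_
    · rw [hord q']
      exact Nat.sInf_le h1
    · rw [hqn]
      exact Nat.find_min' hex ⟨q', hZ', h3, h2, rfl⟩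
  · intro ε hε
    classical
    have hex : ∃ j, ∃ p : ℝ × EuclideanSpace ℝ (Fin m), dist p (t₀, w₀) < ε ∧ Odd j ∧
        (∀ i < j, iteratedDeriv i (fun t => f t p.2) p.1 = 0) ∧
        iteratedDeriv j (fun t => f t p.2) p.1 < 0 :=
      ⟨k, (t₀, w₀), by simpa using hε, hk, hvan, hneg⟩
    have hjk : Nat.find hex ≤ k := Nat.find_min' hex ⟨(t₀, w₀), by simpa using hε, hk, hvan, hneg⟩
    have hmin : ∀ i, (∃ p : ℝ × EuclideanSpace ℝ (Fin m), dist p (t₀, w₀) < ε ∧ Odd i ∧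
        (∀ l < i, iteratedDeriv l (fun t => f t p.2) p.1 = 0) ∧
        iteratedDeriv i (fun t => f t p.2) p.1 < 0) → Nat.find hex ≤ i :=
      fun i hi => Nat.find_min' hex hi
    obtain ⟨⟨t₁, w₁⟩, hd, hodd, hv, hn⟩ := Nat.find_spec hex
    generalize Nat.find hex = j at *
    obtain ⟨n, rfl⟩ := Nat.exists_eq_succ_of_ne_zero hodd.pos.ne'
    obtain ⟨a, b, W, ht₁, hWo, hw₁, hsub, hjneg, hsgn⟩ := exists_sign_change_box hf' hodd hv hn
      (Metric.isOpen_ball.mem_nhds (Metric.mem_ball.2 hd))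
    have hτ : ∀ w ∈ W, ∃ τ ∈ Set.Ioo a b,
        ∀ i < n + 1, iteratedDeriv i (fun t => f t w) τ = 0 := by
      intro w hw
      obtain ⟨τ, hτ, i, hi, hio, hiv, hin⟩ := exists_odd_order_zero (contDiff_slice hf' w)
        (ht₁.1.trans ht₁.2) (hsgn w hw).1 (hsgn w hw).2 (fun x hx => hjneg x hx w hw)
      have hle := hmin i ⟨(τ, w), Metric.mem_ball.1 (hsub ⟨Set.Ioo_subset_Icc_self hτ, hw⟩),
        hio, hiv, hin⟩
      exact ⟨τ, hτ, fun l hl => hiv l (lt_of_lt_of_le hl hle)⟩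
    choose! θ hθ hθv using hτ
    have hneg' : ∀ t ∈ Set.Ioo a b, ∀ w ∈ W, iteratedDeriv (n + 1) (fun t => f t w) t < 0 :=
      fun t ht w hw => hjneg t (Set.Ioo_subset_Icc_self ht) w hw
    obtain ⟨huniq, hsm⟩ := contDiffOn_zero_iteratedDeriv hf' hWo hneg' hθ
      (fun w hw => hθv w hw n (Nat.lt_succ_self n))
    obtain ⟨A, hA, hAneg, hAf⟩ := exists_factorization hf' hneg' hθ hsm hθv
    refine ⟨t₁, w₁, n + 1, hd, ?_, hodd, hodd.pos, hjk, Set.Ioo a b ×ˢ W, W, A, θ,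
      isOpen_Ioo.prod hWo, ⟨ht₁, hw₁⟩, hWo, hw₁, hA, hsm,
      (huniq w₁ hw₁ t₁ ht₁ (hv n (Nat.lt_succ_self n))).symm, hAneg, fun p hp _ => hAf p hp⟩
    simpa using hv 0 (Nat.succ_pos n)
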